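/- arXiv:2003.12004 — 3 statements merged into one kernel-verified Lean document; each statement's English description precedes it below -/
import Mathlib

section
/- For every x ∈ ℝⁿ, the maximum of ‖(A+Δ)x − b‖² over all matrices Δ ∈ ℝ^{m×n} with |Δ| ≤ D equals ‖Ax−b‖² + 2⟨|Ax−b|, D|x|⟩ + ‖D|x|‖², where ⟨·,·⟩ is the Euclidean inner product on ℝ^m. -/
/-!
Row `i` of the residual `(A + Δ)x - b` differs from row `i` of `Ax - b` by at most `(D|x|)ᵢ`. All
these bounds are attained by a single `Δ`, whose entries are those of `D` with signs chosen so that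
every term of `(Δx)ᵢ` has the sign of `(Ax - b)ᵢ`. So `|Ax - b| + D|x|` is the greatest absolute
residual in the componentwise order, and hence maximises the sum of squares, which is monotone on
nonnegative vectors.
-/

namespace RobustLeastSquares

open Matrix

variable {ι κ R : Type*} [Fintype κ]

section Ring

variable [Ring R] [LinearOrder R] [IsOrderedRing R]

theorem abs_mulVec_le {Δ D : Matrix ι κ R} (hΔ : ∀ i j, |Δ i j| ≤ D i j) (x : κ → R) :
    |Δ *ᵥ x| ≤ D *ᵥ |x| := fun i =>
  calc
    |∑ j, Δ i j * x j| ≤ ∑ j, |Δ i j * x j| := Finset.abs_sum_le_sum_abs _ _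
    _ = ∑ j, |Δ i j| * |x j| := by simp only [abs_mul]
    _ ≤ ∑ j, D i j * |x j| := by gcongr with j; exact hΔ i j

theorem exists_abs_le_one_mul_eq_abs (a : R) : ∃ t : R, |t| ≤ 1 ∧ t * a = |a| := by
  rcases abs_choice a with ha | ha
  · exact ⟨1, abs_one.le, by rw [one_mul, ha]⟩
  · exact ⟨-1, (abs_neg 1).trans_le abs_one.le, by rw [neg_one_mul, ha]⟩

theorem exists_mulVec_eq_mul_mulVec_abs {D : Matrix ι κ R} (hD : ∀ i j, 0 ≤ D i j)
    {s : ι → R} (hs : |s| ≤ 1) (x : κ → R) :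
    ∃ Δ : Matrix ι κ R, (∀ i j, |Δ i j| ≤ D i j) ∧ Δ *ᵥ x = s * (D *ᵥ |x|) := by
  choose t ht htx using fun j => exists_abs_le_one_mul_eq_abs (x j)
  refine ⟨of fun i j => s i * D i j * t j, fun i j => ?_, ?_⟩
  · calc
      |s i * D i j * t j| = |s i| * D i j * |t j| := by
        rw [abs_mul, abs_mul, abs_of_nonneg (hD i j)]
      _ ≤ |s i| * D i j := mul_le_of_le_one_right (mul_nonneg (abs_nonneg _) (hD i j)) (ht j)
      _ ≤ D i j := mul_le_of_le_one_left (hD i j) (hs i)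
  · ext i
    simp only [mulVec, dotProduct, of_apply, Pi.mul_apply, Pi.abs_apply, Finset.mul_sum,
      mul_assoc, htx]

theorem exists_abs_le_one_abs_add_mul_eq (r : ι → R) {d : ι → R} (hd : 0 ≤ d) :
    ∃ s : ι → R, |s| ≤ 1 ∧ |r + s * d| = |r| + d := by
  have h_coord (i : ι) : ∃ t : R, |t| ≤ 1 ∧ |r i + t * d i| = |r i| + d i := by
    rcases le_total 0 (r i) with hr | hr
    · refine ⟨1, abs_one.le, ?_⟩
      rw [one_mul, abs_of_nonneg (add_nonneg hr (hd i)), abs_of_nonneg hr]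
    · refine ⟨-1, (abs_neg 1).trans_le abs_one.le, ?_⟩
      rw [neg_one_mul, abs_of_nonpos (add_nonpos hr (neg_nonpos.2 (hd i))), abs_of_nonpos hr,
        neg_add, neg_neg]
  choose s hs hsd using h_coord
  exact ⟨s, hs, funext hsd⟩

theorem isGreatest_abs_residual (A : Matrix ι κ R) {D : Matrix ι κ R}
    (hD : ∀ i j, 0 ≤ D i j) (b : ι → R) (x : κ → R) :
    IsGreatest ((fun Δ => |(A + Δ) *ᵥ x - b|) '' {Δ | ∀ i j, |Δ i j| ≤ D i j})
      (|A *ᵥ x - b| + D *ᵥ |x|) := by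
  have h_residual (Δ : Matrix ι κ R) : (A + Δ) *ᵥ x - b = A *ᵥ x - b + Δ *ᵥ x := by
    rw [add_mulVec, add_sub_right_comm]
  simp only [h_residual]
  constructor
  · have h_nonneg : 0 ≤ D *ᵥ |x| := fun i =>
      Finset.sum_nonneg fun j _ => mul_nonneg (hD i j) (abs_nonneg (x j))
    obtain ⟨s, hs, hsd⟩ := exists_abs_le_one_abs_add_mul_eq (A *ᵥ x - b) h_nonneg
    obtain ⟨Δ, hΔ, hΔx⟩ := exists_mulVec_eq_mul_mulVec_abs hD hs x
    exact ⟨Δ, hΔ, by simp only [hΔx, hsd]⟩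
  · rintro _ ⟨Δ, hΔ, rfl⟩
    exact (abs_add_le _ _).trans (add_le_add_right (abs_mulVec_le hΔ x) _)

end Ring

theorem monotoneOn_sum_pow [Fintype ι] [Semiring R] [PartialOrder R] [IsOrderedRing R] (k : ℕ) :
    MonotoneOn (fun v : ι → R => ∑ i, v i ^ k) (Set.Ici 0) := fun _ hv _ _ hvw =>
  Finset.sum_le_sum fun i _ => pow_le_pow_left₀ (hv i) (hvw i) k

theorem sum_abs_add_sq [Fintype ι] [CommRing R] [LinearOrder R] (r d : ι → R) :
    ∑ i, (|r i| + d i) ^ 2 = ∑ i, r i ^ 2 + 2 * ∑ i, |r i| * d i + ∑ i, d i ^ 2 := by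
  simp only [add_sq, sq_abs, Finset.sum_add_distrib, Finset.mul_sum, mul_assoc]

end RobustLeastSquares

open Matrix RobustLeastSquares in
theorem robust_inner_max_floating_general {ι κ R : Type*} [Fintype ι] [Fintype κ]
    [CommRing R] [LinearOrder R] [IsOrderedRing R] (A : Matrix ι κ R) {D : Matrix ι κ R}
    (hD : ∀ i j, 0 ≤ D i j) (b : ι → R) (x : κ → R) :
    IsGreatest
      {r : R | ∃ Δ : Matrix ι κ R,
        (∀ i j, |Δ i j| ≤ D i j) ∧ r = ∑ i, (((A + Δ) *ᵥ x) i - b i) ^ 2}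
      (∑ i, ((A *ᵥ x) i - b i) ^ 2 + 2 * ∑ i, |(A *ᵥ x) i - b i| * (D *ᵥ |x|) i
        + ∑ i, (D *ᵥ |x|) i ^ 2) := by
  have h_abs_nonneg : (fun Δ => |(A + Δ) *ᵥ x - b|) '' {Δ | ∀ i j, |Δ i j| ≤ D i j} ⊆
      Set.Ici 0 :=
    Set.image_subset_iff.2 fun Δ _ => abs_nonneg ((A + Δ) *ᵥ x - b)
  have h_max := ((monotoneOn_sum_pow 2).mono h_abs_nonneg).map_isGreatest
    (isGreatest_abs_residual A hD b x)
  rw [Set.image_image] at h_max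
  simpa only [Set.image, Set.mem_ofPred_eq, Pi.add_apply, Pi.abs_apply, Pi.sub_apply,
    sum_abs_add_sq, sq_abs, eq_comm] using h_max

/-- For every `x ∈ ℝⁿ`, the maximum of `‖(A+Δ)x − b‖²` over all matrices
`Δ ∈ ℝ^{m×n}` with `|Δ| ≤ D` (entrywise) equals
`‖Ax−b‖² + 2⟨|Ax−b|, D|x|⟩ + ‖D|x|‖²`. -/
theorem robust_inner_max_floating
    (m n : ℕ) (hm : 0 < m) (hn : 0 < n)
    (A D : Matrix (Fin m) (Fin n) ℝ) (b : Fin m → ℝ)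
    (hD : ∀ i j, 0 ≤ D i j) (x : Fin n → ℝ) :
    IsGreatest
      {r : ℝ | ∃ Δ : Matrix (Fin m) (Fin n) ℝ,
        (∀ i j, |Δ i j| ≤ D i j) ∧
        r = ∑ i, ((A + Δ).mulVec x i - b i) ^ 2}
      ((∑ i, (A.mulVec x i - b i) ^ 2)
        + 2 * (∑ i, |A.mulVec x i - b i| * D.mulVec (fun j => |x j|) i)
        + ∑ i, (D.mulVec (fun j => |x j|) i) ^ 2) :=
  robust_inner_max_floating_general A hD b x
end

section
/- For every x ∈ ℝⁿ and every δ ≥ 0, the maximum of ‖(A+Δ)x − b‖² over all matrices Δ ∈ ℝ^{m×n} with ‖Δ‖_∞ ≤ δ equals ‖Ax−b‖² + 2δ‖x‖₁‖Ax−b‖₁ + m δ² ‖x‖₁², where ‖Δ‖_∞ denotes the maximum absolute value of any entry of Δ. -/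
/-!
Each entry of `Δ x` has absolute value at most `δ ‖x‖₁`, so each coordinate of the residual
`r = A x - b` can grow in absolute value by at most that much. The rank-one perturbation
`Δ = δ u vᵀ`, with `u` the signs of `r` and `v` the signs of `x`, attains this bound in all
coordinates simultaneously. Expanding `∑ i, (|r i| + δ ‖x‖₁) ^ 2` gives the formula. Over `ℂ` the
same argument works with phases in place of signs.
-/

open Matrix

theorem ciSup_ciSup_le_iff {α ι κ : Type*} [ConditionallyCompleteLattice α] [Finite ι] [Finite κ]
    [Nonempty ι] [Nonempty κ] {f : ι → κ → α} {a : α} :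
    ⨆ i, ⨆ j, f i j ≤ a ↔ ∀ i j, f i j ≤ a := by
  simp only [ciSup_le_iff (Set.finite_range _).bddAbove]

theorem sum_add_const_sq {ι R : Type*} [Fintype ι] [CommSemiring R] (f : ι → R) (c : R) :
    ∑ i, (f i + c) ^ 2 = ∑ i, f i ^ 2 + 2 * c * ∑ i, f i + Fintype.card ι * c ^ 2 := by
  simp only [add_sq, Finset.sum_add_distrib, ← Finset.mul_sum, ← Finset.sum_mul,
    Finset.sum_const, Finset.card_univ, nsmul_eq_mul]
  ring

section Perturbation

variable {κ : Type*} [Fintype κ]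

theorem norm_dotProduct_le_mul_sum_norm {R : Type*} [NonUnitalSeminormedRing R] {δ : ℝ}
    {v : κ → R} (hv : ∀ j, ‖v j‖ ≤ δ) (x : κ → R) : ‖v ⬝ᵥ x‖ ≤ δ * ∑ j, ‖x j‖ :=
  calc
    ‖v ⬝ᵥ x‖ ≤ ∑ j, ‖v j * x j‖ := norm_sum_le _ _
    _ ≤ ∑ j, δ * ‖x j‖ := Finset.sum_le_sum fun j _ ↦ norm_mul_le_of_le (hv j) le_rfl
    _ = δ * ∑ j, ‖x j‖ := (Finset.mul_sum ..).symm

variable {ι 𝕜 : Type*} [RCLike 𝕜]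

theorem exists_norm_eq_one_dotProduct_eq_sum_norm (x : κ → 𝕜) :
    ∃ v : κ → 𝕜, (∀ j, ‖v j‖ = 1) ∧ v ⬝ᵥ x = ((∑ j, ‖x j‖ : ℝ) : 𝕜) := by
  choose v hv hvx using fun j ↦ RCLike.exists_norm_eq_mul_self (x j)
  exact ⟨v, hv, by simp only [dotProduct, ← hvx, RCLike.ofReal_sum]⟩

theorem exists_norm_eq_forall_norm_add_mulVec_eq (r : ι → 𝕜) (x : κ → 𝕜) {δ : ℝ} (hδ : 0 ≤ δ) :
    ∃ Δ : Matrix ι κ 𝕜, (∀ i j, ‖Δ i j‖ = δ) ∧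
      ∀ i, ‖r i + (Δ *ᵥ x) i‖ = ‖r i‖ + δ * ∑ j, ‖x j‖ := by
  choose u hu hur using fun i ↦ RCLike.exists_norm_mul_eq_self (r i)
  obtain ⟨v, hv, hvx⟩ := exists_norm_eq_one_dotProduct_eq_sum_norm x
  refine ⟨(δ : 𝕜) • vecMulVec u v, fun i j ↦ ?_, fun i ↦ ?_⟩
  · simp [vecMulVec_apply, hu, hv, abs_of_nonneg hδ]
  · have aligned : r i + (((δ : 𝕜) • vecMulVec u v) *ᵥ x) i
        = u i * ((‖r i‖ + δ * ∑ j, ‖x j‖ : ℝ) : 𝕜) := by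
      nth_rw 1 [← hur i]
      simp only [smul_mulVec, vecMulVec_mulVec, hvx, Pi.smul_apply, smul_eq_mul,
        MulOpposite.smul_eq_mul_unop, MulOpposite.unop_op, RCLike.ofReal_add, RCLike.ofReal_mul]
      ring
    rw [aligned, norm_mul, hu, one_mul, RCLike.norm_of_nonneg (by positivity)]

end Perturbation

theorem robust_inner_max_fixed_general {ι κ 𝕜 : Type*} [Fintype ι] [Fintype κ] [RCLike 𝕜]
    (A : Matrix ι κ 𝕜) (b : ι → 𝕜) {δ : ℝ} (hδ : 0 ≤ δ) (x : κ → 𝕜) :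
    IsGreatest
      {s : ℝ | ∃ Δ : Matrix ι κ 𝕜,
        (∀ i j, ‖Δ i j‖ ≤ δ) ∧ s = ∑ i, ‖((A + Δ) *ᵥ x) i - b i‖ ^ 2}
      (∑ i, ‖(A *ᵥ x) i - b i‖ ^ 2
        + 2 * δ * (∑ j, ‖x j‖) * (∑ i, ‖(A *ᵥ x) i - b i‖)
        + Fintype.card ι * δ ^ 2 * (∑ j, ‖x j‖) ^ 2) := by
  have residual (Δ : Matrix ι κ 𝕜) (i : ι) :
      ((A + Δ) *ᵥ x) i - b i = ((A *ᵥ x) i - b i) + (Δ *ᵥ x) i := by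
    rw [add_mulVec, Pi.add_apply, add_sub_right_comm]
  have expand := sum_add_const_sq (fun i ↦ ‖(A *ᵥ x) i - b i‖) (δ * ∑ j, ‖x j‖)
  rw [mul_pow, ← mul_assoc, ← mul_assoc] at expand
  simp only [residual, ← expand]
  constructor
  · obtain ⟨Δ, hΔ, hmax⟩ :=
      exists_norm_eq_forall_norm_add_mulVec_eq (fun i ↦ (A *ᵥ x) i - b i) x hδ
    exact ⟨Δ, fun i j ↦ (hΔ i j).le, by simp only [hmax]⟩
  · rintro _ ⟨Δ, hΔ, rfl⟩
    gcongr with i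
    exact norm_add_le_of_le le_rfl (norm_dotProduct_le_mul_sum_norm (hΔ i) x)

/-- For every `x ∈ ℝⁿ` and `δ ≥ 0`, the maximum of `‖(A+Δ)x − b‖²` over all
matrices `Δ` with `‖Δ‖_∞ = max_{i,j} |Δ_{i,j}| ≤ δ` equals
`‖Ax−b‖² + 2δ‖x‖₁‖Ax−b‖₁ + m δ² ‖x‖₁²`. -/
theorem robust_inner_max_fixed
    (m n : ℕ) (hm : 0 < m) (hn : 0 < n)
    (A : Matrix (Fin m) (Fin n) ℝ) (b : Fin m → ℝ)
    (δ : ℝ) (hδ : 0 ≤ δ) (x : Fin n → ℝ) :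
    IsGreatest
      {r : ℝ | ∃ Δ : Matrix (Fin m) (Fin n) ℝ,
        (⨆ i, ⨆ j, |Δ i j|) ≤ δ ∧
        r = ∑ i, ((A + Δ).mulVec x i - b i) ^ 2}
      ((∑ i, (A.mulVec x i - b i) ^ 2)
        + 2 * δ * (∑ j, |x j|) * (∑ i, |A.mulVec x i - b i|)
        + (m : ℝ) * δ ^ 2 * (∑ j, |x j|) ^ 2) := by
  have : Nonempty (Fin m) := Fin.pos_iff_nonempty.mp hm
  have : Nonempty (Fin n) := Fin.pos_iff_nonempty.mp hn
  simpa only [ciSup_ciSup_le_iff, Real.norm_eq_abs, sq_abs, Fintype.card_fin] using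
    robust_inner_max_fixed_general A b hδ x
end

section
/- The function f : ℝⁿ → ℝ defined by f(x) = ‖Ax−b‖² + 2⟨|Ax−b|, D|x|⟩ + ‖D|x|‖² is convex. -/
/-!
Completing the square componentwise, `f(x) = ∑ i, (|Ax - b|ᵢ + (D|x|)ᵢ) ^ 2`. Each base is the sum
of the absolute value of an affine function and of a combination of the convex functions `|xⱼ|` with
the nonnegative weights `D i j`, so it is convex; it is also nonnegative, and squaring is increasing
and convex on the nonnegative scalars.
-/

open scoped Matrix

section OrderedModule

variable {𝕜 E β : Type*} [Semiring 𝕜] [PartialOrder 𝕜] [AddCommMonoid E] [SMul 𝕜 E] {s : Set E}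

theorem convexOn_finset_sum {ι : Type*} [AddCommMonoid β] [PartialOrder β] [IsOrderedAddMonoid β]
    [Module 𝕜 β] (hs : Convex 𝕜 s) (t : Finset ι) {f : ι → E → β}
    (hf : ∀ i ∈ t, ConvexOn 𝕜 s (f i)) : ConvexOn 𝕜 s fun x => ∑ i ∈ t, f i x := by
  rw [← Finset.sum_fn]
  exact Finset.sum_induction f (ConvexOn 𝕜 s) (fun _ _ => ConvexOn.add)
    (convexOn_const (0 : β) hs) hf

theorem convexOn_abs_of_convexOn_of_concaveOn [AddCommGroup β] [LinearOrder β]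
    [IsOrderedAddMonoid β] [Module 𝕜 β] [PosSMulStrictMono 𝕜 β] {f : E → β} (hf : ConvexOn 𝕜 s f)
    (hf' : ConcaveOn 𝕜 s f) : ConvexOn 𝕜 s fun x => |f x| :=
  hf.sup hf'.neg

end OrderedModule

theorem convexOn_dotProduct {𝕜 E κ : Type*} [CommSemiring 𝕜] [PartialOrder 𝕜] [IsOrderedRing 𝕜]
    [AddCommMonoid E] [SMul 𝕜 E] [Fintype κ] {s : Set E} {w : κ → 𝕜} {f : E → κ → 𝕜}
    (hs : Convex 𝕜 s) (hw : 0 ≤ w) (hf : ∀ j, ConvexOn 𝕜 s fun x => f x j) :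
    ConvexOn 𝕜 s fun x => w ⬝ᵥ f x :=
  convexOn_finset_sum hs _ fun j _ => (hf j).smul (hw j)

theorem sum_abs_add_sq {ι R : Type*} [CommRing R] [LinearOrder R] [IsOrderedRing R]
    (t : Finset ι) (r e : ι → R) :
    ∑ i ∈ t, (|r i| + e i) ^ 2
      = ∑ i ∈ t, r i ^ 2 + 2 * ∑ i ∈ t, |r i| * e i + ∑ i ∈ t, e i ^ 2 := by
  simp only [add_sq, sq_abs, mul_assoc, Finset.sum_add_distrib, Finset.mul_sum]

section LinearOrderedCommRing

variable {𝕜 ι κ : Type*} [CommRing 𝕜] [LinearOrder 𝕜] [IsStrictOrderedRing 𝕜] [Fintype κ]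

theorem convexOn_abs_mulVec_sub (A : Matrix ι κ 𝕜) (i : ι) (c : 𝕜) :
    ConvexOn 𝕜 Set.univ fun x : κ → 𝕜 => |(A *ᵥ x) i - c| := by
  let row : (κ → 𝕜) →ₗ[𝕜] 𝕜 := LinearMap.proj i ∘ₗ A.mulVecLin
  simp only [sub_eq_add_neg]
  exact convexOn_abs_of_convexOn_of_concaveOn
    ((row.convexOn convex_univ).add_const (-c)) ((row.concaveOn convex_univ).add_const (-c))

theorem convexOn_mulVec_abs {D : Matrix ι κ 𝕜} {i : ι} (hD : 0 ≤ D i) :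
    ConvexOn 𝕜 Set.univ fun x : κ → 𝕜 => (D *ᵥ fun j => |x j|) i := by
  refine convexOn_dotProduct convex_univ hD fun j => ?_
  let coord : (κ → 𝕜) →ₗ[𝕜] 𝕜 := LinearMap.proj j
  exact convexOn_abs_of_convexOn_of_concaveOn
    (coord.convexOn convex_univ) (coord.concaveOn convex_univ)

theorem robust_objective_convex_general [Fintype ι] (A D : Matrix ι κ 𝕜) (b : ι → 𝕜)
    (hD : ∀ i j, 0 ≤ D i j) :
    ConvexOn 𝕜 Set.univ
      (fun x : κ → 𝕜 =>
        (∑ i, (A.mulVec x i - b i) ^ 2)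
        + 2 * (∑ i, |A.mulVec x i - b i| * D.mulVec (fun j => |x j|) i)
        + ∑ i, (D.mulVec (fun j => |x j|) i) ^ 2) := by
  simp only [← sum_abs_add_sq]
  refine convexOn_finset_sum convex_univ _ fun i _ => ?_
  have base_convex : ConvexOn 𝕜 Set.univ fun x : κ → 𝕜 =>
      |(A *ᵥ x) i - b i| + (D *ᵥ fun j => |x j|) i :=
    (convexOn_abs_mulVec_sub A i (b i)).add (convexOn_mulVec_abs (hD i))
  have base_nonneg (x : κ → 𝕜) : 0 ≤ |(A *ᵥ x) i - b i| + (D *ᵥ fun j => |x j|) i :=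
    add_nonneg (abs_nonneg _) (dotProduct_nonneg_of_nonneg (hD i) fun j => abs_nonneg (x j))
  exact base_convex.pow (fun x _ => base_nonneg x) 2

end LinearOrderedCommRing

/-- The function `f(x) = ‖Ax−b‖² + 2⟨|Ax−b|, D|x|⟩ + ‖D|x|‖²` is convex. -/
theorem robust_objective_convex
    (m n : ℕ) (hm : 0 < m) (hn : 0 < n)
    (A D : Matrix (Fin m) (Fin n) ℝ) (b : Fin m → ℝ)
    (hD : ∀ i j, 0 ≤ D i j) :
    ConvexOn ℝ Set.univ
      (fun x : Fin n → ℝ =>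
        (∑ i, (A.mulVec x i - b i) ^ 2)
        + 2 * (∑ i, |A.mulVec x i - b i| * D.mulVec (fun j => |x j|) i)
        + ∑ i, (D.mulVec (fun j => |x j|) i) ^ 2) :=
  robust_objective_convex_general A D b hD
end
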